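/- Let K be a field and let C⁰, C¹, C² be finite-dimensional K-vector spaces with linear maps d₀ : C⁰ → C¹ and d₁ : C¹ → C² satisfying d₁ ∘ d₀ = 0. Let (φ₀, φ₁, φ₂) and (ψ₀, ψ₁, ψ₂) be two cochain endomorphisms of this complex (i.e. each commutes with d₀ and d₁ as above), and suppose they are chain homotopic: there exist linear maps h₁ : C¹ → C⁰ and h₂ : C² → C¹ with ψ₀ − φ₀ = h₁ ∘ d₀, ψ₁ − φ₁ = d₀ ∘ h₁ + h₂ ∘ d₁, and ψ₂ − φ₂ = d₁ ∘ h₂. Then det(φ₀) · det(φ₂) · det(ψ₁) = det(ψ₀) · det(ψ₂) · det(φ₁). -/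

import Mathlib

/-!
The homotopy is applied one map at a time. Passing from `(φ₀, φ₁, φ₂)` to
`(φ₀ + h₁ d₀, φ₁ + d₀ h₁, φ₂)` and from there to `(ψ₀, ψ₁, ψ₂)` changes only two adjacent
terms at each step, and `d₁ d₀ = 0` makes the intermediate triple a cochain map. A single step is a
twisted form of `det (1 + d h) = det (1 + h d)`: if `d a = b d`, then
`[1, -h; d, b] * [a, 0; 0, 1] = [1, 0; 0, b] * [a, -h; d, 1]`, and taking determinants gives
`det (b + d h) * det a = det b * det (a + h d)`. No determinant is ever cancelled, so the argument
works over any commutative ring.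
-/

theorem matrix_det_mul_det_add_mul_comm {R m n : Type*} [CommRing R]
    [Fintype m] [DecidableEq m] [Fintype n] [DecidableEq n]
    {A : Matrix n n R} {B : Matrix m m R} {D : Matrix m n R} (h : D * A = B * D)
    (H : Matrix n m R) :
    A.det * (B + D * H).det = (A + H * D).det * B.det := by
  have factor : Matrix.fromBlocks 1 (-H) D B * Matrix.fromBlocks A 0 0 1 =
      Matrix.fromBlocks 1 0 0 B * Matrix.fromBlocks A (-H) D 1 := by
    simp [Matrix.fromBlocks_multiply, h]
  have det_factor := congrArg Matrix.det factor
  simp only [Matrix.det_mul, Matrix.det_fromBlocks_one₁₁, Matrix.det_fromBlocks_one₂₂,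
    Matrix.mul_neg, Matrix.neg_mul, sub_neg_eq_add, Matrix.mul_zero, sub_zero] at det_factor
  linear_combination det_factor

theorem linearMap_det_mul_det_add_comp_comm {R M N : Type*} [CommRing R]
    [AddCommGroup M] [Module R M] [Module.Free R M] [Module.Finite R M]
    [AddCommGroup N] [Module R N] [Module.Free R N] [Module.Finite R N]
    {a : M →ₗ[R] M} {b : N →ₗ[R] N} {d : M →ₗ[R] N} (comm : d ∘ₗ a = b ∘ₗ d)
    (h : N →ₗ[R] M) :
    LinearMap.det a * LinearMap.det (b + d ∘ₗ h) =
      LinearMap.det (a + h ∘ₗ d) * LinearMap.det b := by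
  classical
  let u := Module.Free.chooseBasis R M
  let v := Module.Free.chooseBasis R N
  have comm_matrix : LinearMap.toMatrix u v d * LinearMap.toMatrix u u a =
      LinearMap.toMatrix v v b * LinearMap.toMatrix u v d := by
    rw [← LinearMap.toMatrix_comp, ← LinearMap.toMatrix_comp, comm]
  simpa only [← LinearMap.toMatrix_comp, ← map_add, LinearMap.det_toMatrix] using
    matrix_det_mul_det_add_mul_comm comm_matrix (LinearMap.toMatrix v u h)

theorem stmt13_general {R C0 C1 C2 : Type*} [CommRing R]
    [AddCommGroup C0] [Module R C0] [Module.Free R C0] [Module.Finite R C0]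
    [AddCommGroup C1] [Module R C1] [Module.Free R C1] [Module.Finite R C1]
    [AddCommGroup C2] [Module R C2] [Module.Free R C2] [Module.Finite R C2]
    {d0 : C0 →ₗ[R] C1} {d1 : C1 →ₗ[R] C2} (hd : d1 ∘ₗ d0 = 0)
    {φ0 : C0 →ₗ[R] C0} {φ1 : C1 →ₗ[R] C1} {φ2 : C2 →ₗ[R] C2}
    (hφ0 : d0 ∘ₗ φ0 = φ1 ∘ₗ d0) (hφ1 : d1 ∘ₗ φ1 = φ2 ∘ₗ d1)
    {ψ0 : C0 →ₗ[R] C0} {ψ1 : C1 →ₗ[R] C1} {ψ2 : C2 →ₗ[R] C2}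
    {h1 : C1 →ₗ[R] C0} {h2 : C2 →ₗ[R] C1}
    (hh0 : ψ0 - φ0 = h1 ∘ₗ d0)
    (hh1 : ψ1 - φ1 = d0 ∘ₗ h1 + h2 ∘ₗ d1)
    (hh2 : ψ2 - φ2 = d1 ∘ₗ h2) :
    LinearMap.det φ0 * LinearMap.det φ2 * LinearMap.det ψ1 =
      LinearMap.det ψ0 * LinearMap.det ψ2 * LinearMap.det φ1 := by
  obtain rfl : ψ0 = φ0 + h1 ∘ₗ d0 := sub_eq_iff_eq_add'.mp hh0
  obtain rfl : ψ1 = φ1 + d0 ∘ₗ h1 + h2 ∘ₗ d1 := by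
    rw [add_assoc]
    exact sub_eq_iff_eq_add'.mp hh1
  obtain rfl : ψ2 = φ2 + d1 ∘ₗ h2 := sub_eq_iff_eq_add'.mp hh2
  have comm_mid : d1 ∘ₗ (φ1 + d0 ∘ₗ h1) = φ2 ∘ₗ d1 := by
    rw [LinearMap.comp_add, ← LinearMap.comp_assoc, hd, LinearMap.zero_comp, add_zero, hφ1]
  have det_h1 := linearMap_det_mul_det_add_comp_comm hφ0 h1
  have det_h2 := linearMap_det_mul_det_add_comp_comm comm_mid h2
  calc LinearMap.det φ0 * LinearMap.det φ2 * LinearMap.det (φ1 + d0 ∘ₗ h1 + h2 ∘ₗ d1)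
    _ = LinearMap.det φ0 *
          (LinearMap.det (φ1 + d0 ∘ₗ h1 + h2 ∘ₗ d1) * LinearMap.det φ2) := by ring
    _ = LinearMap.det φ0 * LinearMap.det (φ1 + d0 ∘ₗ h1) * LinearMap.det (φ2 + d1 ∘ₗ h2) := by
        rw [← det_h2, mul_assoc]
    _ = LinearMap.det (φ0 + h1 ∘ₗ d0) * LinearMap.det (φ2 + d1 ∘ₗ h2) * LinearMap.det φ1 := by
        rw [det_h1, mul_right_comm]

/-- Chain-homotopic cochain endomorphisms `(φ₀, φ₁, φ₂)` and `(ψ₀, ψ₁, ψ₂)` of a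
three-term complex `0 → C⁰ → C¹ → C² → 0` of finite-dimensional vector spaces
have equal alternating products of determinants:
`det(φ₀)·det(φ₂)·det(ψ₁) = det(ψ₀)·det(ψ₂)·det(φ₁)`. -/
theorem stmt13 (K : Type*) [Field K] (C0 C1 C2 : Type*)
    [AddCommGroup C0] [Module K C0] [FiniteDimensional K C0]
    [AddCommGroup C1] [Module K C1] [FiniteDimensional K C1]
    [AddCommGroup C2] [Module K C2] [FiniteDimensional K C2]
    (d0 : C0 →ₗ[K] C1) (d1 : C1 →ₗ[K] C2) (hd : d1 ∘ₗ d0 = 0)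
    (φ0 : C0 →ₗ[K] C0) (φ1 : C1 →ₗ[K] C1) (φ2 : C2 →ₗ[K] C2)
    (hφ0 : d0 ∘ₗ φ0 = φ1 ∘ₗ d0) (hφ1 : d1 ∘ₗ φ1 = φ2 ∘ₗ d1)
    (ψ0 : C0 →ₗ[K] C0) (ψ1 : C1 →ₗ[K] C1) (ψ2 : C2 →ₗ[K] C2)
    (hψ0 : d0 ∘ₗ ψ0 = ψ1 ∘ₗ d0) (hψ1 : d1 ∘ₗ ψ1 = ψ2 ∘ₗ d1)
    (h1 : C1 →ₗ[K] C0) (h2 : C2 →ₗ[K] C1)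
    (hh0 : ψ0 - φ0 = h1 ∘ₗ d0)
    (hh1 : ψ1 - φ1 = d0 ∘ₗ h1 + h2 ∘ₗ d1)
    (hh2 : ψ2 - φ2 = d1 ∘ₗ h2) :
    LinearMap.det φ0 * LinearMap.det φ2 * LinearMap.det ψ1 =
      LinearMap.det ψ0 * LinearMap.det ψ2 * LinearMap.det φ1 :=
  stmt13_general hd hφ0 hφ1 hh0 hh1 hh2
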